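/- arXiv:1206.1636 — 2 statements merged into one kernel-verified Lean document; each statement's English description precedes it below -/
import Mathlib

section
/- Let φ = (1+√5)/2. For every ξ in the open interval (φ, φ²), the three triples (1/(1−ξ), 1 − 1/ξ, ξ), (ξ, 1/(1−ξ), 1 − 1/ξ) and (1 − 1/ξ, ξ, 1/(1−ξ)) all belong to 𝔸. -/
/-!
For `(ρ, σ, τ) = (1 / (1 - ξ), 1 - 1 / ξ, ξ)` one has `ρστ = (1 - ρ)(1 - σ)(1 - τ) = -1`, and the three
cevians are parallel. Their lengths are therefore in the fixed ratio `1 / (ξ - 1) : 1 / ξ : 1`,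
independent of the triangle: the squared lengths are `N / (ξ - 1) ^ 2`, `N / ξ ^ 2` and `N` with
`N = ξ (ξ - 1) c ^ 2 + ξ a ^ 2 - (ξ - 1) b ^ 2`. Since `b < a + c`, the number `N` exceeds
`(a - (ξ - 1) c) ^ 2`, so it is positive (`cevian_form_pos`). The ratio is that of a triangle exactly when
`ξ ^ 2 - ξ - 1 > 0` and `ξ ^ 2 - 3 ξ + 1 < 0`, that is, for `φ < ξ < φ ^ 2`.

The other two triples follow because `T`, and hence `A`, is invariant under cyclic rotation.
-/

/-- The set of side-length triples of non-degenerate triangles. -/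
def T : Set (ℝ × ℝ × ℝ) :=
  {p | |p.1 - p.2.1| < p.2.2 ∧ p.2.2 < p.1 + p.2.1}

/-- The cevian length `f a b c ρ = AA_ρ`. -/
noncomputable def f (a b c ρ : ℝ) : ℝ :=
  Real.sqrt (ρ * (ρ - 1) * a ^ 2 + ρ * b ^ 2 + (1 - ρ) * c ^ 2)

/-- The set of parameter triples `(ρ, σ, τ)` for which the three cevians form a
triangle for every triangle. -/
def A : Set (ℝ × ℝ × ℝ) :=
  {p | ∀ a b c : ℝ, (a, b, c) ∈ T →
    (f a b c p.1, f b c a p.2.1, f c a b p.2.2) ∈ T}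

/-- The golden ratio. -/
noncomputable def phi : ℝ := (1 + Real.sqrt 5) / 2

lemma T_rotate {a b c : ℝ} (h : (a, b, c) ∈ T) : (b, c, a) ∈ T := by
  simp only [T, Set.mem_ofPred_eq, abs_lt] at h ⊢
  obtain ⟨⟨h1, h2⟩, h3⟩ := h
  refine ⟨⟨?_, ?_⟩, ?_⟩ <;> linarith

lemma A_rotate {ρ σ τ : ℝ} (h : (ρ, σ, τ) ∈ A) : (τ, ρ, σ) ∈ A := by
  intro a b c habc
  exact T_rotate (T_rotate (h b c a (T_rotate habc)))

/-- The squared length of the cevian with parameter `ξ` to the side `c` is positive. -/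
lemma cevian_form_pos {a b c ξ : ℝ} (h : (a, b, c) ∈ T) (hξ : 1 < ξ) :
    0 < ξ * (ξ - 1) * c ^ 2 + ξ * a ^ 2 + (1 - ξ) * b ^ 2 := by
  simp only [T, Set.mem_ofPred_eq, abs_lt] at h
  obtain ⟨⟨h1, h2⟩, h3⟩ := h
  have hb : 0 < b := by linarith
  have hsq : b ^ 2 < (a + c) ^ 2 := by
    exact pow_lt_pow_left₀ (by linarith) hb.le two_ne_zero
  nlinarith [mul_pos (sub_pos.2 hξ) (sub_pos.2 hsq), sq_nonneg (a - (ξ - 1) * c)]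

lemma base_triple_mem_A {ξ : ℝ} (h1 : 1 < ξ) (h2 : 0 < ξ ^ 2 - ξ - 1)
    (h3 : ξ ^ 2 - 3 * ξ + 1 < 0) : (1 / (1 - ξ), 1 - 1 / ξ, ξ) ∈ A := by
  intro a b c habc
  have hN := cevian_form_pos habc h1
  have hξ : 0 < ξ := by linarith
  have hξ1 : 0 < ξ - 1 := by linarith
  have hne : ξ ≠ 0 := hξ.ne'
  have hne1 : ξ - 1 ≠ 0 := hξ1.ne'
  have hne2 : 1 - ξ ≠ 0 := by linarith
  have hz : f c a b ξ = √(ξ * (ξ - 1) * c ^ 2 + ξ * a ^ 2 + (1 - ξ) * b ^ 2) := rfl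
  have hdiv : ∀ {k : ℝ}, 0 < k → ∀ {n : ℝ}, √(n / k ^ 2) = √n / k := by
    intro k hk n
    rw [Real.sqrt_div' _ (sq_nonneg k), Real.sqrt_sq hk.le]
  have hx : f a b c (1 / (1 - ξ)) = f c a b ξ / (ξ - 1) := by
    rw [hz, ← hdiv hξ1, f]
    congr 1
    rw [show ξ - 1 = -(1 - ξ) by ring]
    field_simp
    ring
  have hy : f b c a (1 - 1 / ξ) = f c a b ξ / ξ := by
    rw [hz, ← hdiv hξ, f]
    congr 1
    field_simp
    ring
  have hs : 0 < f c a b ξ := Real.sqrt_pos.2 hN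
  show (f a b c (1 / (1 - ξ)), f b c a (1 - 1 / ξ), f c a b ξ) ∈ T
  rw [hx, hy]
  generalize f c a b ξ = s at hs
  have hdiff : s / (ξ - 1) - s / ξ = s * (1 / (ξ * (ξ - 1))) := by
    field_simp
    ring
  have hsum : s / (ξ - 1) + s / ξ = s * ((2 * ξ - 1) / (ξ * (ξ - 1))) := by
    field_simp
    ring
  have hp : 0 < ξ * (ξ - 1) := mul_pos hξ hξ1
  simp only [T, Set.mem_ofPred_eq]
  rw [hdiff, hsum, abs_of_pos (by positivity)]
  constructor
  · refine mul_lt_of_lt_one_right hs ?_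
    rw [div_lt_one hp]
    linarith
  · refine lt_mul_of_one_lt_right hs ?_
    rw [one_lt_div hp]
    linarith

theorem third_family_in_A (ξ : ℝ) (hξ : ξ ∈ Set.Ioo phi (phi ^ 2)) :
    (1 / (1 - ξ), 1 - 1 / ξ, ξ) ∈ A ∧ (ξ, 1 / (1 - ξ), 1 - 1 / ξ) ∈ A ∧
      (1 - 1 / ξ, ξ, 1 / (1 - ξ)) ∈ A := by
  obtain ⟨hl, hu⟩ := hξ
  have hphi : phi ^ 2 = phi + 1 := by
    have h5 : √(5 : ℝ) ^ 2 = 5 := Real.sq_sqrt (by norm_num)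
    unfold phi
    linear_combination h5 / 4
  have hphi1 : 1 < phi := by
    have h5 : 1 < √(5 : ℝ) := Real.lt_sqrt_of_sq_lt (by norm_num)
    unfold phi
    linarith
  rw [hphi] at hu
  have h2 : 0 < ξ ^ 2 - ξ - 1 := by nlinarith
  -- The roots of `t ^ 2 - 3 t + 1` are `φ + 1` and `2 - φ`.
  have h3 : ξ ^ 2 - 3 * ξ + 1 < 0 := by
    nlinarith [mul_pos (sub_pos.2 hu) (show 0 < ξ - (2 - phi) by linarith)]
  have h := base_triple_mem_A (by linarith) h2 h3
  exact ⟨h, A_rotate h, A_rotate (A_rotate h)⟩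
end

section
/- Let φ = (1+√5)/2 and ξ ∈ ℝ, and let M = M(ξ, −ξ, 2−ξ). Then M·(−1,1,1) = (ξ² − ξ − 1)·(−1,1,1), M·(1, φ⁻², φ²) = (φ² − 1 − ξ)²·(1, φ⁻², φ²), and M·(1, φ², φ⁻²) = (φ⁻² − 1 − ξ)²·(1, φ², φ⁻²). Moreover (φ² − 1 − ξ)²·(φ⁻² − 1 − ξ)² = (ξ² − ξ − 1)². -/
/-!
If `x` is a root of `X² = X + 1`, then `(1, 2 - x, x + 1)` is an eigenvector of `M(ξ, -ξ, 2 - ξ)`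
with eigenvalue `(x - ξ)²` (`mulVec_of_root`). The two roots are `φ` and `1 - φ`, and
`φ² = φ + 1`, `φ⁻² = 2 - φ`, so they give the two golden-ratio eigenvectors. The product of the
eigenvalues is `((φ - ξ)(1 - φ - ξ))² = (ξ² - ξ - 1)²`, since `φ` and `1 - φ` are the roots of
`X² - X - 1`.
-/

/-- The matrix `M(ρ, σ, τ)`. -/
def M (ρ σ τ : ℝ) : Matrix (Fin 3) (Fin 3) ℝ :=
  !![ρ * (ρ - 1), ρ, 1 - ρ;
     1 - σ, σ * (σ - 1), σ;
     τ, 1 - τ, τ * (τ - 1)]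

lemma phi_sq : phi ^ 2 = phi + 1 := by
  have h : Real.sqrt 5 ^ 2 = 5 := Real.sq_sqrt (by norm_num)
  unfold phi
  linear_combination h / 4

lemma phi_sq_inv : (phi ^ 2)⁻¹ = 2 - phi := by
  apply inv_eq_of_mul_eq_one_right
  linear_combination (1 - phi) * phi_sq

lemma mulVec_of_root (ξ x : ℝ) (hx : x ^ 2 = x + 1) :
    (M ξ (-ξ) (2 - ξ)).mulVec ![1, 2 - x, x + 1] = (x - ξ) ^ 2 • ![1, 2 - x, x + 1] := by
  ext i
  fin_cases i <;> simp [M, Matrix.mulVec, dotProduct, Fin.sum_univ_three]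
  · linear_combination -hx
  · linear_combination (x - 1 - 2 * ξ) * hx
  · linear_combination (2 * ξ - x - 2) * hx

theorem eigenstructure_second_family (ξ : ℝ) :
    (M ξ (-ξ) (2 - ξ)).mulVec ![-1, 1, 1] =
        (ξ ^ 2 - ξ - 1) • ![-1, 1, 1] ∧
      (M ξ (-ξ) (2 - ξ)).mulVec ![1, (phi ^ 2)⁻¹, phi ^ 2] =
        (phi ^ 2 - 1 - ξ) ^ 2 • ![1, (phi ^ 2)⁻¹, phi ^ 2] ∧
      (M ξ (-ξ) (2 - ξ)).mulVec ![1, phi ^ 2, (phi ^ 2)⁻¹] =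
        ((phi ^ 2)⁻¹ - 1 - ξ) ^ 2 • ![1, phi ^ 2, (phi ^ 2)⁻¹] ∧
      (phi ^ 2 - 1 - ξ) ^ 2 * ((phi ^ 2)⁻¹ - 1 - ξ) ^ 2 =
        (ξ ^ 2 - ξ - 1) ^ 2 := by
  rw [phi_sq_inv, phi_sq]
  refine ⟨?_, ?_, ?_, ?_⟩
  · ext i
    fin_cases i <;> simp [M, Matrix.mulVec, dotProduct, Fin.sum_univ_three] <;> ring
  · have h := mulVec_of_root ξ phi phi_sq
    rwa [show phi - ξ = phi + 1 - 1 - ξ by ring] at h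
  · have h := mulVec_of_root ξ (1 - phi) (by linear_combination phi_sq)
    rwa [show 2 - (1 - phi) = phi + 1 by ring, show 1 - phi + 1 = 2 - phi by ring,
      show 1 - phi - ξ = 2 - phi - 1 - ξ by ring] at h
  · have h : (phi + 1 - 1 - ξ) * (2 - phi - 1 - ξ) = ξ ^ 2 - ξ - 1 := by
      linear_combination -phi_sq
    rw [← mul_pow, h]
end
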